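/- arXiv:2108.01355 — 2 statements merged into one kernel-verified Lean document; each statement's English description precedes it below -/
import Mathlib

section
/- For every integer n ≥ 1 and every integer k ≥ 2 there exists a divisor d of n such that d ≤ n^{1/k} and τ(n) ≤ 2^k · τ(d)^k, where τ is the number-of-divisors function. -/
/-- Concavity of the logarithm, in discrete form. -/
lemma aux_log (a b : ℕ) (h : b ≤ a) :
    (b : ℝ) * (Real.log (a + 1) - Real.log a) ≤ Real.log (b + 1) := by
  induction b with
  | zero => simp
  | succ b ih =>
    have h1 := ih (by omega)
    have hb : (0 : ℝ) ≤ b := Nat.cast_nonneg b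
    have ha : (b : ℝ) + 1 ≤ a := by exact_mod_cast h
    have ha0 : (0 : ℝ) < a := by linarith
    have h2 : Real.log (a + 1) + Real.log (b + 1) ≤ Real.log (b + 1 + 1) + Real.log a := by
      rw [← Real.log_mul (by positivity) (by positivity),
        ← Real.log_mul (by positivity) (by positivity)]
      apply Real.log_le_log (by positivity)
      nlinarith
    push_cast
    linarith

/-- Effect on the divisor function of removing one prime. -/
lemma aux_tau (d p : ℕ) (hd : d ≠ 0) (hp : p.Prime) (hpd : p ∣ d) :
    (d / p).divisors.card * (d.factorization p + 1) = d.divisors.card * d.factorization p := by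
  obtain ⟨a, m, hm, rfl⟩ := Nat.exists_eq_pow_mul_and_not_dvd hd p hp.ne_one
  have hm0 : m ≠ 0 := by rintro rfl; simp at hm
  have ha : a ≠ 0 := by rintro rfl; simp at hpd; exact hm hpd
  obtain ⟨b, rfl⟩ := Nat.exists_eq_succ_of_ne_zero ha
  have hc : Nat.Coprime p m := (Nat.Prime.coprime_iff_not_dvd hp).2 hm
  have hdiv : p ^ (b + 1) * m / p = p ^ b * m := by
    apply Nat.div_eq_of_eq_mul_left hp.pos; ring
  have hf : (p ^ (b + 1) * m).factorization p = b + 1 := by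
    rw [Nat.factorization_mul (pow_ne_zero _ hp.ne_zero) hm0]
    simp [hp.factorization_self, Nat.factorization_eq_zero_of_not_dvd hm]
  simp only [Nat.succ_eq_add_one]
  rw [hdiv, hf, Nat.Coprime.card_divisors_mul (hc.pow_left _),
    Nat.Coprime.card_divisors_mul (hc.pow_left _), Nat.divisors_prime_pow hp,
    Nat.divisors_prime_pow hp]
  simp
  ring

lemma aux_step (c : ℝ) (d : ℕ) (hd : 1 < d)
    (hf : c * Real.log d ≤ Real.log d.divisors.card) :
    ∃ p, p.Prime ∧ p ∣ d ∧ c * Real.log (d / p : ℕ) ≤ Real.log (d / p).divisors.card := by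
  have hd0 : d ≠ 0 := by omega
  by_cases hA : ∃ p, p.Prime ∧ p ∣ d ∧
      Real.log (d.factorization p + 1) - Real.log (d.factorization p) ≤ c * Real.log p
  · obtain ⟨p, hp, hpd, hA⟩ := hA
    refine ⟨p, hp, hpd, ?_⟩
    have hq0 : d / p ≠ 0 := (Nat.div_pos (Nat.le_of_dvd (by omega) hpd) hp.pos).ne'
    have ht := congrArg (fun x : ℕ => Real.log x) (aux_tau d p hd0 hp hpd)
    have ha : d.factorization p ≠ 0 := (hp.factorization_pos_of_dvd hd0 hpd).ne'
    have h1 : ((d / p).divisors.card : ℝ) ≠ 0 := by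
      simpa using hq0.bot_lt.ne'
    have h2 : (d.divisors.card : ℝ) ≠ 0 := by simpa using hd0
    have h3 : (d.factorization p : ℝ) ≠ 0 := by exact_mod_cast ha
    simp only [Nat.cast_mul, Nat.cast_add, Nat.cast_one] at ht
    rw [Real.log_mul h1 (by positivity), Real.log_mul h2 h3] at ht
    have hl : Real.log d = Real.log (d / p : ℕ) + Real.log p := by
      rw [← Real.log_mul (by exact_mod_cast hq0) (by exact_mod_cast hp.ne_zero),
        ← Nat.cast_mul, Nat.div_mul_cancel hpd]
    rw [hl] at hf
    linarith
  · push Not at hA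
    obtain ⟨p, hp, hpd⟩ := Nat.exists_prime_and_dvd hd.ne'
    refine ⟨p, hp, hpd, ?_⟩
    have hq0 : d / p ≠ 0 := (Nat.div_pos (Nat.le_of_dvd (by omega) hpd) hp.pos).ne'
    have hmd : d / p ∣ d := Nat.div_dvd_of_dvd hpd
    generalize d / p = m at hq0 hmd
    have hl : Real.log m = ∑ q ∈ m.primeFactors, (m.factorization q : ℝ) * Real.log q := by
      conv_lhs => rw [← Nat.prod_factorization_pow_eq_self hq0]
      rw [Finsupp.prod, Nat.cast_prod, Real.log_prod]
      · simp
      · intro q hq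
        have : q.Prime := Nat.prime_of_mem_primeFactors (by simpa using hq)
        exact_mod_cast pow_ne_zero _ this.ne_zero
    rw [hl, Nat.card_divisors hq0, Nat.cast_prod, Real.log_prod
      (by intro q hq; positivity), Finset.mul_sum]
    apply Finset.sum_le_sum
    intro q hq
    have hqp := Nat.prime_of_mem_primeFactors hq
    have hqd := (Nat.dvd_of_mem_primeFactors hq).trans hmd
    have h1 := hA q hqp hqd
    have h2 := aux_log (d.factorization q) (m.factorization q)
      ((Nat.factorization_le_iff_dvd hq0 hd0).2 hmd q)
    have h3 := mul_le_mul_of_nonneg_left h1.le (Nat.cast_nonneg (α := ℝ) (m.factorization q))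
    push_cast
    linarith

/-- Lemma 2.2: for every `n ≥ 1` and `k ≥ 2` there is a divisor `d ∣ n` with `d ≤ n^{1/k}`
and `τ(n) ≤ 2^k τ(d)^k`. -/
theorem exists_small_divisor_tau_bound (n k : ℕ) (hn : 1 ≤ n) (hk : 2 ≤ k) :
    ∃ d : ℕ, d ∣ n ∧ (d : ℝ) ≤ (n : ℝ) ^ ((1 : ℝ) / k) ∧
      n.divisors.card ≤ 2 ^ k * d.divisors.card ^ k := by
  rcases hn.eq_or_lt with rfl | hn1
  · exact ⟨1, by simp, by simp, by simpa using Nat.one_le_two_pow⟩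
  have hlogn : 0 < Real.log n := Real.log_pos (by exact_mod_cast hn1)
  have hn0 : n ≠ 0 := by omega
  set c : ℝ := Real.log n.divisors.card / Real.log n with hc
  have hc0 : 0 ≤ c := div_nonneg (Real.log_natCast_nonneg _) hlogn.le
  have hcn : c * Real.log n = Real.log n.divisors.card := by rw [hc]; field_simp
  have hex : ∃ d, d ∣ n ∧ n < d ^ k ∧ c * Real.log d ≤ Real.log d.divisors.card :=
    ⟨n, dvd_rfl, by
      calc n = n ^ 1 := (pow_one n).symm
        _ < n ^ k := Nat.pow_lt_pow_right hn1 (by omega), hcn.le⟩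
  classical
  obtain ⟨hdn, hdk, hf⟩ := Nat.find_spec hex
  have hmin := fun m hm => Nat.find_min hex (m := m) hm
  generalize Nat.find hex = d at hdn hdk hf hmin
  have hd1 : 1 < d := by
    by_contra h
    have : d ^ k ≤ 1 ^ k := Nat.pow_le_pow_left (by omega) k
    simp at this
    omega
  have hd0 : d ≠ 0 := by omega
  obtain ⟨p, hp, hpd, hfp⟩ := aux_step c d hd1 hf
  have hmd : d / p ∣ n := (Nat.div_dvd_of_dvd hpd).trans hdn
  have hle : (d / p) ^ k ≤ n := by
    by_contra h
    exact hmin (d / p) (Nat.div_lt_self (by omega) hp.one_lt) ⟨hmd, by omega, hfp⟩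
  refine ⟨d / p, hmd, ?_, ?_⟩
  · rw [one_div]
    apply (Real.le_rpow_inv_iff_of_pos (by positivity) (by positivity) (by positivity)).2
    rw [Real.rpow_natCast]
    exact_mod_cast hle
  · have ht := aux_tau d p hd0 hp hpd
    have ha : 0 < d.factorization p := hp.factorization_pos_of_dvd hd0 hpd
    have h2 : d.divisors.card ≤ 2 * (d / p).divisors.card := by
      by_contra h
      push Not at h
      nlinarith
    rw [← mul_pow]
    refine le_trans ?_ (Nat.pow_le_pow_left h2 k)
    have hdc : (0 : ℝ) < d.divisors.card := by
      exact_mod_cast Finset.card_pos.2 (Nat.nonempty_divisors.2 hd0)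
    have hnc : (0 : ℝ) < n.divisors.card := by
      exact_mod_cast Finset.card_pos.2 (Nat.nonempty_divisors.2 hn0)
    have h3 : Real.log n ≤ k * Real.log d := by
      rw [← Real.log_pow]
      exact Real.log_le_log (by positivity) (by exact_mod_cast hdk.le)
    have h4 : Real.log n.divisors.card ≤ Real.log ((d.divisors.card : ℝ) ^ k) := by
      rw [Real.log_pow, ← hcn]
      calc c * Real.log n ≤ c * (k * Real.log d) := mul_le_mul_of_nonneg_left h3 hc0
        _ = k * (c * Real.log d) := by ring
        _ ≤ _ := mul_le_mul_of_nonneg_left hf (Nat.cast_nonneg k)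
    have h5 := (Real.log_le_log_iff hnc (by positivity)).1 h4
    exact_mod_cast h5
end

section
/- There is an absolute constant A such that for all real numbers 2 ≤ z ≤ y, the number of integers n with y < n ≤ 2y all of whose prime factors are < z is at most A · y · e^{-u/2}, where u := log y / log z. -/
open scoped BigOperators Classical
open Finset

/-- weak Mertens -/
lemma sn_mertens (n : ℕ) (hn : 1 ≤ n) :
    ∑ p ∈ (n+1).primesBelow, Real.log p / p ≤ 2 * Real.log n := by
  have hn0 : (0:ℝ) < n := by exact_mod_cast hn
  have h1 := ArithmeticFunction.sum_Ioc_mul_zeta_eq_sum (R := ℝ) ArithmeticFunction.vonMangoldt n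
  rw [ArithmeticFunction.vonMangoldt_mul_zeta] at h1
  have h2 : ∑ k ∈ Ioc 0 n, ArithmeticFunction.log k ≤ n * Real.log n := by
    calc _ ≤ ∑ k ∈ Ioc 0 n, Real.log n := by
          refine sum_le_sum fun k hk => ?_
          rw [Finset.mem_Ioc] at hk
          rw [ArithmeticFunction.log_apply]
          exact Real.log_le_log (by exact_mod_cast hk.1) (by exact_mod_cast hk.2)
      _ = _ := by simp
  have h3 : ∑ p ∈ (n+1).primesBelow, (n:ℝ) / 2 * (Real.log p / p) ≤
      ∑ k ∈ Ioc 0 n, ArithmeticFunction.vonMangoldt k * ((n / k : ℕ) : ℝ) := by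
    calc _ ≤ ∑ p ∈ (n+1).primesBelow, ArithmeticFunction.vonMangoldt p * ((n / p : ℕ) : ℝ) := by
          refine sum_le_sum fun p hp => ?_
          rw [Nat.mem_primesBelow] at hp
          rw [ArithmeticFunction.vonMangoldt_apply_prime hp.2]
          have hp0 : (0:ℝ) < p := by exact_mod_cast hp.2.pos
          have hl : 0 ≤ Real.log p := Real.log_natCast_nonneg p
          have hd : (n:ℝ) / p / 2 ≤ ((n / p : ℕ) : ℝ) := by
            have e1 : 1 ≤ n / p := (Nat.one_le_div_iff hp.2.pos).2 (by omega)
            have e2 : n < p * (n / p + 1) := Nat.lt_mul_div_succ n hp.2.pos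
            have e3 : (n:ℝ) < p * (((n / p : ℕ) : ℝ) + 1) := by exact_mod_cast e2
            have e4 : (1:ℝ) ≤ ((n / p : ℕ) : ℝ) := by exact_mod_cast e1
            rw [div_div, div_le_iff₀ (by positivity)]
            nlinarith
          calc (n:ℝ) / 2 * (Real.log p / p) = Real.log p * ((n:ℝ) / p / 2) := by ring
            _ ≤ _ := by gcongr
      _ ≤ _ := by
          refine sum_le_sum_of_subset_of_nonneg ?_ ?_
          · intro p hp
            rw [Nat.mem_primesBelow] at hp
            rw [Finset.mem_Ioc]
            exact ⟨hp.2.pos, by omega⟩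
          · intro k _ _
            exact mul_nonneg ArithmeticFunction.vonMangoldt_nonneg (by positivity)
  rw [← mul_sum] at h3
  have h4 : (n:ℝ) / 2 * ∑ p ∈ (n+1).primesBelow, Real.log p / p ≤ n * Real.log n := by
    refine h3.trans (le_trans (le_of_eq ?_) h2)
    rw [h1]
  have : (n:ℝ) / 2 * ∑ p ∈ (n+1).primesBelow, Real.log p / p ≤ n/2 * (2 * Real.log n) := by
    linarith
  exact le_of_mul_le_mul_left this (by positivity)

/-- the homomorphism n ↦ n^s -/
noncomputable def snHom (s : ℝ) : ℕ →* ℝ where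
  toFun n := (n:ℝ) ^ s
  map_one' := by simp
  map_mul' a b := by
    push_cast
    exact Real.mul_rpow (by positivity) (by positivity)

lemma sn_zeta (δ : ℝ) (hδ : 0 < δ) (N : ℕ) :
    ∏ p ∈ N.primesBelow, (1 - (p:ℝ) ^ (-1 - δ))⁻¹ ≤ 1 + 1 / δ := by
  have hs : Summable (fun n : ℕ => (n:ℝ) ^ (-1 - δ)) := Real.summable_nat_rpow.2 (by linarith)
  have h := EulerProduct.prod_primesBelow_geometric_eq_tsum_smoothNumbers
    (f := snHom (-1 - δ)) hs N
  change ∏ p ∈ N.primesBelow, (1 - (p:ℝ) ^ (-1 - δ))⁻¹ =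
    ∑' m : N.smoothNumbers, ((m:ℕ):ℝ) ^ (-1 - δ) at h
  rw [h]
  have h1 : ∑' m : N.smoothNumbers, ((m:ℕ):ℝ) ^ (-1 - δ) ≤ ∑' n : ℕ, (n:ℝ) ^ (-1 - δ) :=
    hs.tsum_subtype_le _ (N.smoothNumbers) (fun n => by positivity)
  refine h1.trans ?_
  have h2 := ZetaAsymptotics.zeta_limit_aux1 (s := 1 + δ) (by linarith)
  have h3 : 0 ≤ ZetaAsymptotics.termTSum (1 + δ) :=
    tsum_nonneg fun n => ZetaAsymptotics.term_nonneg _ _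
  rw [hs.tsum_eq_zero_add]
  have h4 : ∑' n : ℕ, ((n + 1 : ℕ):ℝ) ^ (-1 - δ) = ∑' n : ℕ, 1 / (n + 1 : ℝ) ^ (1 + δ) := by
    refine tsum_congr fun n => ?_
    rw [show -1 - δ = -(1 + δ) by ring, Real.rpow_neg (by positivity)]
    push_cast
    rw [one_div]
  rw [h4]
  have h5 : ((0:ℕ):ℝ) ^ (-1 - δ) = 0 := by
    rw [Nat.cast_zero, Real.zero_rpow (by linarith)]
  rw [h5]
  have h6 : 0 ≤ (1 + δ) * ZetaAsymptotics.termTSum (1 + δ) := by positivity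
  have h7 : 1 + δ - 1 = δ := by ring
  rw [h7] at h2
  linarith

lemma sn_beta {z : ℝ} (hz : 2 ≤ z) : 0 < 1 / (2 * Real.log z) ∧ 1 / (2 * Real.log z) ≤ 3/4 ∧
    z ^ (1 / (2 * Real.log z)) = Real.exp (1/2) ∧ 1/2 < Real.log z := by
  have h2 : Real.log 2 ≤ Real.log z := Real.log_le_log (by norm_num) hz
  have := Real.log_two_gt_d9
  have hl : 0 < Real.log z := by linarith
  refine ⟨by positivity, ?_, ?_, by linarith⟩
  · rw [div_le_iff₀ (by positivity)]; linarith
  · rw [Real.rpow_def_of_pos (by linarith)]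
    congr 1; field_simp

lemma sn_ceil (z : ℝ) : ⌈z⌉₊ ≤ ⌊z⌋₊ + 1 := Nat.ceil_le_floor_add_one z

lemma sn_quarter : (2:ℝ) ^ (-(1/4) : ℝ) ≤ 7/8 := by
  rw [Real.rpow_neg (by norm_num)]
  rw [inv_le_comm₀ (by positivity) (by norm_num)]
  rw [Real.le_rpow_iff_log_le (by norm_num) (by norm_num)]
  have : 4 * Real.log ((7/8:ℝ)⁻¹) ≤ Real.log 2 := by
    have : Real.log (((7/8:ℝ)⁻¹)^4) = 4 * Real.log ((7/8:ℝ)⁻¹) := by rw [Real.log_pow]; norm_num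
    rw [← this]
    exact Real.log_le_log (by norm_num) (by norm_num)
  linarith

lemma sn_prod {z : ℝ} (hz : 2 ≤ z) :
    ∏ p ∈ (⌈z⌉₊).primesBelow, (1 - (p:ℝ) ^ (1 / (2 * Real.log z) - 1))⁻¹ ≤
      Real.exp (24 * Real.exp (1/2)) * (3 * Real.log z) := by
  obtain ⟨hb0, hb1, hzb, hl⟩ := sn_beta hz
  set β := 1 / (2 * Real.log z) with hβ
  set δ := 1 / Real.log z with hδ
  have hδ0 : 0 < δ := by positivity
  have hmert : ∑ p ∈ (⌈z⌉₊).primesBelow, Real.log p / p ≤ 2 * Real.log z := by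
    have hf : 1 ≤ ⌊z⌋₊ := Nat.le_floor (by push_cast; linarith)
    calc _ ≤ ∑ p ∈ (⌊z⌋₊ + 1).primesBelow, Real.log p / p := by
          refine sum_le_sum_of_subset_of_nonneg ?_ ?_
          · intro p hp
            rw [Nat.mem_primesBelow] at hp ⊢
            exact ⟨hp.1.trans_le (sn_ceil z), hp.2⟩
          · intro p _ _
            exact div_nonneg (Real.log_natCast_nonneg p) (by positivity)
      _ ≤ 2 * Real.log ⌊z⌋₊ := sn_mertens _ hf
      _ ≤ _ := by
          have : Real.log ⌊z⌋₊ ≤ Real.log z :=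
            Real.log_le_log (by exact_mod_cast hf) (Nat.floor_le (by linarith))
          linarith
  have key : ∀ p ∈ (⌈z⌉₊).primesBelow, (1 - (p:ℝ) ^ (β - 1))⁻¹ ≤
      (1 - (p:ℝ) ^ (-1 - δ))⁻¹ * Real.exp (12 * Real.exp (1/2) / Real.log z * (Real.log p / p)) := by
    intro p hp
    rw [Nat.mem_primesBelow] at hp
    have hp2 : (2:ℝ) ≤ p := by exact_mod_cast hp.2.two_le
    have hp0 : (0:ℝ) < p := by linarith
    have hpz : (p:ℝ) ≤ z := (Nat.lt_ceil.1 hp.1).le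
    have hlp : 0 ≤ Real.log p := Real.log_natCast_nonneg p
    set a := (p:ℝ) ^ (β - 1) with ha
    set b := (p:ℝ) ^ (-1 - δ) with hb
    have ha1 : a ≤ 7/8 := by
      calc a ≤ (p:ℝ) ^ (-(1/4) : ℝ) := Real.rpow_le_rpow_of_exponent_le (by linarith) (by linarith)
        _ ≤ (2:ℝ) ^ (-(1/4) : ℝ) := Real.rpow_le_rpow_of_nonpos (by norm_num) hp2 (by norm_num)
        _ ≤ _ := sn_quarter
    have hba : b ≤ a := Real.rpow_le_rpow_of_exponent_le (by linarith) (by linarith)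
    have hab : b = a * Real.exp (-((β + δ) * Real.log p)) := by
      rw [ha, hb, Real.rpow_def_of_pos hp0, Real.rpow_def_of_pos hp0, ← Real.exp_add]
      congr 1; ring
    have ha2 : a ≤ Real.exp (1/2) / p := by
      rw [ha, Real.rpow_sub_one hp0.ne', ← hzb]
      gcongr
    have ha0 : 0 < a := by positivity
    have hd : a - b ≤ 3/2 * Real.exp (1/2) / Real.log z * (Real.log p / p) := by
      have e := Real.add_one_le_exp (-((β + δ) * Real.log p))
      have hbd : β + δ = 3/2 / Real.log z := by rw [hβ, hδ]; field_simp; norm_num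
      calc a - b = a * (1 - Real.exp (-((β + δ) * Real.log p))) := by rw [hab]; ring
        _ ≤ a * ((β + δ) * Real.log p) := by gcongr; linarith
        _ ≤ Real.exp (1/2) / p * ((β + δ) * Real.log p) := by gcongr
        _ = _ := by rw [hbd]; ring
    have hA : 0 < 1 - a := by linarith
    have hB : 0 < 1 - b := by linarith
    have h8 : (a - b) / (1 - a) ≤ 12 * Real.exp (1/2) / Real.log z * (Real.log p / p) := by
      have : (a - b) / (1 - a) ≤ 8 * (a - b) := by
        rw [div_le_iff₀ hA]; nlinarith
      calc _ ≤ 8 * (a - b) := this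
        _ ≤ 8 * (3/2 * Real.exp (1/2) / Real.log z * (Real.log p / p)) := by gcongr
        _ = _ := by ring
    calc (1 - a)⁻¹ = (1 - b)⁻¹ * ((a - b) / (1 - a) + 1) := by field_simp; ring
      _ ≤ (1 - b)⁻¹ * Real.exp ((a - b) / (1 - a)) := by gcongr; exact Real.add_one_le_exp _
      _ ≤ _ := by gcongr
  have hnn : ∀ p ∈ (⌈z⌉₊).primesBelow, 0 ≤ (1 - (p:ℝ) ^ (β - 1))⁻¹ := by
    intro p hp
    rw [Nat.mem_primesBelow] at hp
    have hp2 : (1:ℝ) ≤ p := by exact_mod_cast hp.2.one_lt.le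
    have := Real.rpow_le_one_of_one_le_of_nonpos hp2 (by linarith : β - 1 ≤ 0)
    rw [inv_nonneg]; linarith
  refine (Finset.prod_le_prod hnn key).trans ?_
  rw [Finset.prod_mul_distrib, ← Real.exp_sum, ← mul_sum, mul_comm]
  have hz2 := sn_zeta δ hδ0 ⌈z⌉₊
  have h1 : 1 + 1 / δ ≤ 3 * Real.log z := by rw [hδ, one_div_one_div]; linarith
  refine mul_le_mul (Real.exp_le_exp.2 ?_) (hz2.trans h1) ?_ (by positivity)
  · calc _ ≤ 12 * Real.exp (1/2) / Real.log z * (2 * Real.log z) := by gcongr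
      _ = _ := by field_simp; norm_num
  · refine prod_nonneg fun p hp => ?_
    rw [Nat.mem_primesBelow] at hp
    have hp2 : (1:ℝ) ≤ p := by exact_mod_cast hp.2.one_lt.le
    have := Real.rpow_le_one_of_one_le_of_nonpos hp2 (by linarith : -1 - δ ≤ 0)
    rw [inv_nonneg]; linarith

lemma sn_sum {z : ℝ} (hz : 2 ≤ z) (T : Finset ℕ) (hT : ∀ m ∈ T, m ∈ Nat.smoothNumbers ⌈z⌉₊) :
    ∑ m ∈ T, (m:ℝ) ^ (1 / (2 * Real.log z) - 1) ≤
      Real.exp (24 * Real.exp (1/2)) * (3 * Real.log z) := by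
  refine le_trans ?_ (sn_prod hz)
  obtain ⟨hb0, hb1, hzb, hl⟩ := sn_beta hz
  set β := 1 / (2 * Real.log z) with hβ
  have h := (EulerProduct.summable_and_hasSum_smoothNumbers_prod_primesBelow_geometric
    (f := snHom (β - 1)) (by
      intro p hp
      change ‖(p:ℝ) ^ (β - 1)‖ < 1
      rw [Real.norm_of_nonneg (by positivity)]
      exact Real.rpow_lt_one_of_one_lt_of_neg (by exact_mod_cast hp.one_lt) (by linarith)) ⌈z⌉₊).2
  change HasSum (fun m : (⌈z⌉₊).smoothNumbers ↦ ((m:ℕ):ℝ) ^ (β - 1))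
    (∏ p ∈ (⌈z⌉₊).primesBelow, (1 - (p:ℝ) ^ (β - 1))⁻¹) at h
  have h2 := sum_le_hasSum (T.subtype (· ∈ Nat.smoothNumbers ⌈z⌉₊)) (fun i _ => by positivity) h
  refine le_trans (le_of_eq ?_) h2
  rw [Finset.sum_subtype_of_mem (fun m : ℕ => (m:ℝ) ^ (β - 1)) hT]

lemma sn_pi {z : ℝ} (hz : 2 ≤ z) :
    ((#(⌈z⌉₊).primesBelow : ℕ) : ℝ) * Real.log z ≤ 8 * z := by
  obtain ⟨-, -, -, hl⟩ := sn_beta hz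
  have h1 : #(⌈z⌉₊).primesBelow ≤ Nat.primeCounting ⌊z⌋₊ := by
    rw [Nat.primesBelow_card_eq_primeCounting', Nat.primeCounting_eq_primeCounting'_succ]
    exact Nat.monotone_primeCounting' (sn_ceil z)
  have h2 := Chebyshev.pi_le_log4_mul_div (x := z) (by linarith)
  have h3 : ((#(⌈z⌉₊).primesBelow : ℕ) : ℝ) ≤ Real.log 4 * z / Real.log √z + √z :=
    le_trans (by exact_mod_cast h1) h2
  have h4 : Real.log √z = Real.log z / 2 := Real.log_sqrt (by linarith)
  have h5 : Real.log z / 2 ≤ √z := by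
    rw [← h4]
    exact (Real.log_le_sub_one_of_pos (Real.sqrt_pos.2 (by linarith))).trans (by linarith)
  have h6 : √z * √z = z := Real.mul_self_sqrt (by linarith)
  have h7 : Real.log 4 ≤ 3 := by
    have := Real.log_le_sub_one_of_pos (show (0:ℝ) < 4 by norm_num)
    linarith
  calc _ ≤ (Real.log 4 * z / Real.log √z + √z) * Real.log z := by gcongr
    _ = 2 * Real.log 4 * z + √z * Real.log z := by rw [h4]; field_simp
    _ ≤ 2 * 3 * z + √z * (2 * √z) := by gcongr; linarith
    _ = 8 * z := by linarith

lemma sn_lambda (N : ℕ) (t : ℝ) (ht : 1 ≤ t) (Q : Finset ℕ)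
    (hQ : ∀ q ∈ Q, q ∈ Nat.smoothNumbers N ∧ (q:ℝ) ≤ t) :
    ∑ q ∈ Q, ArithmeticFunction.vonMangoldt q ≤ ((#N.primesBelow : ℕ) : ℝ) * Real.log t := by
  set M := ⌊t⌋₊ with hM
  have hM1 : 1 ≤ M := Nat.le_floor (by simpa using ht)
  set L := ∏ p ∈ N.primesBelow, p ^ (Nat.log p M) with hL
  have hL0 : L ≠ 0 := Finset.prod_ne_zero_iff.2 fun p hp =>
    pow_ne_zero _ (Nat.mem_primesBelow.1 hp).2.ne_zero
  calc ∑ q ∈ Q, ArithmeticFunction.vonMangoldt q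
      = ∑ q ∈ Q with IsPrimePow q, ArithmeticFunction.vonMangoldt q := by
        symm
        refine Finset.sum_filter_of_ne fun q _ h => ArithmeticFunction.vonMangoldt_ne_zero_iff.1 h
    _ ≤ ∑ d ∈ L.divisors, ArithmeticFunction.vonMangoldt d := by
        refine sum_le_sum_of_subset_of_nonneg ?_ fun _ _ _ => ArithmeticFunction.vonMangoldt_nonneg
        intro q hq
        rw [Finset.mem_filter] at hq
        obtain ⟨hq, hpp⟩ := hq
        obtain ⟨hs, hqt⟩ := hQ q hq
        rw [Nat.mem_divisors]
        refine ⟨?_, hL0⟩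
        obtain ⟨p, k, hp, hk, rfl⟩ := (isPrimePow_nat_iff q).1 hpp
        have hpN : p < N := Nat.mem_smoothNumbers'.1 hs p hp (dvd_pow_self p hk.ne')
        have hkM : p ^ k ≤ M := Nat.le_floor hqt
        have : k ≤ Nat.log p M := Nat.le_log_of_pow_le hp.one_lt hkM
        exact (pow_dvd_pow p this).trans
          (Finset.dvd_prod_of_mem (fun p => p ^ (Nat.log p M)) (Nat.mem_primesBelow.2 ⟨hpN, hp⟩))
    _ = Real.log L := ArithmeticFunction.vonMangoldt_sum
    _ = ∑ p ∈ N.primesBelow, Real.log ((p ^ (Nat.log p M) : ℕ) : ℝ) := by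
        rw [hL, Nat.cast_prod, Real.log_prod]
        intro p hp
        exact_mod_cast pow_ne_zero _ (Nat.mem_primesBelow.1 hp).2.ne_zero
    _ ≤ ∑ p ∈ N.primesBelow, Real.log t := by
        refine sum_le_sum fun p hp => ?_
        have hp := (Nat.mem_primesBelow.1 hp).2
        refine Real.log_le_log (by exact_mod_cast pow_pos hp.pos _) ?_
        have : p ^ Nat.log p M ≤ M := Nat.pow_log_le_self p (by omega)
        calc ((p ^ Nat.log p M : ℕ) : ℝ) ≤ M := by exact_mod_cast this
          _ ≤ t := Nat.floor_le (by linarith)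
    _ = _ := by rw [sum_const, nsmul_eq_mul]

lemma sn_inner {z : ℝ} (hz : 2 ≤ z) (t : ℝ) (ht : 0 ≤ t) (Q : Finset ℕ)
    (hQ : ∀ q ∈ Q, q ∈ Nat.smoothNumbers ⌈z⌉₊ ∧ (q:ℝ) ≤ t) :
    ∑ q ∈ Q, ArithmeticFunction.vonMangoldt q * (q:ℝ) ^ (1 / (2 * Real.log z)) ≤
      Real.exp (1/2) * 72 * t := by
  obtain ⟨hb0, hb1, hzb, hl⟩ := sn_beta hz
  set β := 1 / (2 * Real.log z) with hβ
  have hle : ∑ q ∈ Q, ArithmeticFunction.vonMangoldt q * (q:ℝ) ^ β ≤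
      (∑ q ∈ Q, ArithmeticFunction.vonMangoldt q) * t ^ β := by
    rw [sum_mul]
    refine sum_le_sum fun q hq => ?_
    have := (hQ q hq).2
    have := ArithmeticFunction.vonMangoldt_nonneg (n := q)
    gcongr
  refine hle.trans ?_
  rcases lt_or_ge t z with h | h
  · have h1 : ∑ q ∈ Q, ArithmeticFunction.vonMangoldt q ≤ Chebyshev.psi t := by
      refine sum_le_sum_of_subset_of_nonneg ?_ fun _ _ _ => ArithmeticFunction.vonMangoldt_nonneg
      intro q hq
      rw [Finset.mem_Ioc]
      exact ⟨Nat.pos_of_ne_zero (Nat.ne_zero_of_mem_smoothNumbers (hQ q hq).1),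
        Nat.le_floor (hQ q hq).2⟩
    have h7 : Real.log 4 ≤ 3 := by
      have := Real.log_le_sub_one_of_pos (show (0:ℝ) < 4 by norm_num)
      linarith
    have h2 := Chebyshev.psi_le_const_mul_self ht
    calc _ ≤ Chebyshev.psi t * z ^ β := by
          gcongr
      _ ≤ (72 * t) * z ^ β := by gcongr; nlinarith
      _ = _ := by rw [hzb]; ring
  · have h1 := sn_lambda ⌈z⌉₊ t (by linarith) Q hQ
    have h2 := sn_pi hz
    have hz0 : 0 < z := by linarith
    have ht0 : 0 < t := by linarith
    set P : ℝ := ((#(⌈z⌉₊).primesBelow : ℕ) : ℝ)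
    obtain ⟨s, hs1, hts⟩ : ∃ s : ℝ, 1 ≤ s ∧ t = z * s :=
      ⟨t / z, (one_le_div hz0).2 h, by field_simp⟩
    have hs0 : 0 < s := by linarith
    have hlog : Real.log t ≤ 9 * s ^ (1 - β) * Real.log z := by
      have e1 : Real.log s ≤ s ^ (1/4:ℝ) / (1/4) := Real.log_le_rpow_div hs0.le (by norm_num)
      have e2 : s ^ (1/4:ℝ) ≤ s ^ (1 - β) := Real.rpow_le_rpow_of_exponent_le hs1 (by linarith)
      have e3 : 1 ≤ s ^ (1 - β) := Real.one_le_rpow hs1 (by linarith)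
      rw [hts, Real.log_mul hz0.ne' hs0.ne']
      nlinarith
    have hz1 : z = z ^ (1 - β) * Real.exp (1/2) := by
      rw [← hzb, ← Real.rpow_add hz0, sub_add_cancel, Real.rpow_one]
    calc _ ≤ (P * Real.log t) * t ^ β := by gcongr
      _ ≤ (P * (9 * s ^ (1 - β) * Real.log z)) * t ^ β :=
        mul_le_mul_of_nonneg_right (mul_le_mul_of_nonneg_left hlog (Nat.cast_nonneg _))
          (Real.rpow_nonneg ht0.le _)
      _ = (P * Real.log z) * (9 * s ^ (1 - β) * t ^ β) := by ring
      _ ≤ (8 * z) * (9 * s ^ (1 - β) * t ^ β) := by gcongr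
      _ = 72 * z * s ^ (1 - β) * t ^ β := by ring
      _ = 72 * (z ^ (1 - β) * Real.exp (1/2)) * s ^ (1 - β) * t ^ β := by rw [← hz1]
      _ = Real.exp (1/2) * 72 * ((z ^ (1 - β) * s ^ (1 - β)) * t ^ β) := by ring
      _ = Real.exp (1/2) * 72 * t := by
        rw [← Real.mul_rpow hz0.le hs0.le, ← hts, ← Real.rpow_add ht0, sub_add_cancel, Real.rpow_one]

theorem smooth_numbers_upper_bound :
    ∃ A : ℝ, ∀ y z : ℝ, 2 ≤ z → z ≤ y →
      (((Finset.range (⌊2 * y⌋₊ + 1)).filter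
          (fun n : ℕ => y < n ∧ (n : ℝ) ≤ 2 * y ∧
            ∀ p : ℕ, p.Prime → p ∣ n → (p : ℝ) < z)).card : ℝ) ≤
        A * y * Real.exp (-(Real.log y / Real.log z) / 2) := by
  refine ⟨Real.exp (1/2) * 144 * (Real.exp (24 * Real.exp (1/2)) * 3), fun y z hz hzy => ?_⟩
  set S := (Finset.range (⌊2 * y⌋₊ + 1)).filter
          (fun n : ℕ => y < n ∧ (n : ℝ) ≤ 2 * y ∧
            ∀ p : ℕ, p.Prime → p ∣ n → (p : ℝ) < z) with hS
  obtain ⟨hb0, hb1, hzb, hl⟩ := sn_beta hz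
  have hy0 : 0 < y := by linarith
  have hly : Real.log z ≤ Real.log y := Real.log_le_log (by linarith) hzy
  have hsum := fun T => sn_sum hz T
  have hinner := sn_inner hz
  have hexp : Real.exp (-(Real.log y / Real.log z) / 2) * y ^ (1 / (2 * Real.log z)) = 1 := by
    rw [Real.rpow_def_of_pos hy0, ← Real.exp_add]
    rw [Real.exp_eq_one_iff]; field_simp; ring
  set β := 1 / (2 * Real.log z) with hβ
  have hSmem : ∀ n ∈ S, y < n ∧ (n:ℝ) ≤ 2 * y ∧ n ∈ Nat.smoothNumbers ⌈z⌉₊ := by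
    intro n hn
    rw [hS, Finset.mem_filter] at hn
    refine ⟨hn.2.1, hn.2.2.1, Nat.mem_smoothNumbers'.2 fun p hp hd => ?_⟩
    exact Nat.lt_ceil.2 (hn.2.2.2 p hp hd)
  set T := (Finset.range (⌊2 * y⌋₊ + 1)).filter (fun n => n ∈ Nat.smoothNumbers ⌈z⌉₊) with hT
  have hdiv : ∀ n ∈ S, ∀ d, d ∣ n → d ∈ T := by
    intro n hn d hd
    obtain ⟨-, h2, h3⟩ := hSmem n hn
    rw [hT, Finset.mem_filter, Finset.mem_range]
    refine ⟨?_, Nat.mem_smoothNumbers_of_dvd h3 hd⟩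
    have : d ≤ n := Nat.le_of_dvd (Nat.pos_of_ne_zero (Nat.ne_zero_of_mem_smoothNumbers h3)) hd
    have : n ≤ ⌊2 * y⌋₊ := Nat.le_floor h2
    omega
  have hlow : (#S : ℝ) * (y ^ β * Real.log y) ≤ ∑ n ∈ S, (n:ℝ) ^ β * Real.log n := by
    rw [← nsmul_eq_mul, ← sum_const]
    refine sum_le_sum fun n hn => ?_
    have h1 := (hSmem n hn).1
    have : 0 ≤ Real.log y := by linarith
    gcongr
  have hup : ∑ n ∈ S, (n:ℝ) ^ β * Real.log n ≤
      ∑ m ∈ T, ∑ q ∈ T, ∑ n ∈ S,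
        if q * m = n then (n:ℝ) ^ β * ArithmeticFunction.vonMangoldt q else 0 := by
    have hrw : ∑ m ∈ T, ∑ q ∈ T, ∑ n ∈ S,
        (if q * m = n then (n:ℝ) ^ β * ArithmeticFunction.vonMangoldt q else 0) =
        ∑ n ∈ S, ∑ q ∈ T, ∑ m ∈ T,
        if q * m = n then (n:ℝ) ^ β * ArithmeticFunction.vonMangoldt q else 0 := by
      rw [Finset.sum_comm]
      rw [Finset.sum_congr rfl fun q _ => Finset.sum_comm]
      rw [Finset.sum_comm]
    rw [hrw]
    refine sum_le_sum fun n hn => ?_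
    have hn0 : n ≠ 0 := Nat.ne_zero_of_mem_smoothNumbers (hSmem n hn).2.2
    rw [← ArithmeticFunction.vonMangoldt_sum, mul_sum]
    have hnn : ∀ q m : ℕ, 0 ≤
        (if q * m = n then (n:ℝ) ^ β * ArithmeticFunction.vonMangoldt q else 0) := by
      intro q m
      have := ArithmeticFunction.vonMangoldt_nonneg (n := q)
      split_ifs <;> positivity
    calc ∑ q ∈ n.divisors, (n:ℝ) ^ β * ArithmeticFunction.vonMangoldt q
        ≤ ∑ q ∈ n.divisors, ∑ m ∈ T,
        (if q * m = n then (n:ℝ) ^ β * ArithmeticFunction.vonMangoldt q else 0) := by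
          refine sum_le_sum fun q hq => ?_
          have hqn := Nat.dvd_of_mem_divisors hq
          have hm : n / q ∈ T := hdiv n hn _ (Nat.div_dvd_of_dvd hqn)
          have := Finset.single_le_sum (f := fun m => 
            (if q * m = n then (n:ℝ) ^ β * ArithmeticFunction.vonMangoldt q else 0))
            (fun m _ => hnn q m) hm
          simpa [Nat.mul_div_cancel' hqn] using this
      _ ≤ _ := by
          refine sum_le_sum_of_subset_of_nonneg ?_ fun q _ _ => sum_nonneg fun m _ => hnn q m
          intro q hq
          exact hdiv n hn q (Nat.dvd_of_mem_divisors hq)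
  have hm : ∀ m ∈ T, ∑ q ∈ T, ∑ n ∈ S,
        (if q * m = n then (n:ℝ) ^ β * ArithmeticFunction.vonMangoldt q else 0) ≤
        Real.exp (1/2) * 144 * y * (m:ℝ) ^ (β - 1) := by
    intro m hm
    rw [hT, Finset.mem_filter] at hm
    have hm0 : (0:ℝ) < m := by
      exact_mod_cast Nat.pos_of_ne_zero (Nat.ne_zero_of_mem_smoothNumbers hm.2)
    have h1 := hinner (2 * y / m) (by positivity) (T.filter (fun q => q * m ∈ S)) (by
      intro q hq
      rw [Finset.mem_filter, hT, Finset.mem_filter] at hq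
      refine ⟨hq.1.2, ?_⟩
      rw [le_div_iff₀ hm0]
      exact_mod_cast (hSmem _ hq.2).2.1)
    calc _ = ∑ q ∈ T, if q * m ∈ S then
          ((q * m : ℕ):ℝ) ^ β * ArithmeticFunction.vonMangoldt q else 0 := by
          refine sum_congr rfl fun q _ => ?_
          rw [Finset.sum_ite_eq]
      _ = ∑ q ∈ T.filter (fun q => q * m ∈ S),
          ((q * m : ℕ):ℝ) ^ β * ArithmeticFunction.vonMangoldt q :=
          (Finset.sum_filter _ _).symm
      _ = (m:ℝ) ^ β * ∑ q ∈ T.filter (fun q => q * m ∈ S),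
          ArithmeticFunction.vonMangoldt q * (q:ℝ) ^ β := by
          rw [mul_sum]
          refine sum_congr rfl fun q _ => ?_
          rw [Nat.cast_mul, Real.mul_rpow (by positivity) (by positivity)]
          ring
      _ ≤ (m:ℝ) ^ β * (Real.exp (1/2) * 72 * (2 * y / m)) := by gcongr
      _ = _ := by rw [Real.rpow_sub_one hm0.ne']; ring
  have htot : (#S : ℝ) * (y ^ β * Real.log y) ≤
      Real.exp (1/2) * 144 * y * (Real.exp (24 * Real.exp (1/2)) * (3 * Real.log y)) := by
    refine hlow.trans (hup.trans ((sum_le_sum hm).trans ?_))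
    rw [← mul_sum]
    have := hsum T (fun m hm => (Finset.mem_filter.1 hm).2)
    gcongr
    refine this.trans ?_
    gcongr
  have hlp : 0 < Real.log y := by linarith
  have h1 : (#S : ℝ) * y ^ β ≤
      Real.exp (1/2) * 144 * (Real.exp (24 * Real.exp (1/2)) * 3) * y := by
    refine le_of_mul_le_mul_right ?_ hlp
    calc _ = (#S : ℝ) * (y ^ β * Real.log y) := by ring
      _ ≤ _ := htot
      _ = _ := by ring
  calc (#S : ℝ) = (#S : ℝ) * y ^ β * Real.exp (-(Real.log y / Real.log z) / 2) := by
        rw [mul_assoc, mul_comm (y ^ β), hexp, mul_one]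
    _ ≤ _ := by gcongr
end
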